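/- For every integer n ≥ 2, each power z^d for 0 ≤ d ≤ n lies in the invariant subalgebra VG_n^{S_n}, and the family (1, z, z^2, …, z^n) is a basis of VG_n^{S_n} as a ℚ-vector space. -/

import Mathlib

noncomputable section

/-- Index set for the variables `x_{ij}` with `i ≠ j` in `{1, …, n+1}` (as `Fin (n+1)`). -/
abbrev VGidx (n : ℕ) := {p : Fin (n+1) × Fin (n+1) // p.1 ≠ p.2}

/-- The defining ideal of the Varchenko–Gel'fand ring of the braid arrangement `A_n`. -/
def VGrel (n : ℕ) : Ideal (MvPolynomial (VGidx n) ℚ) :=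
  Ideal.span
    ({q | ∃ v : VGidx n, q = MvPolynomial.X v ^ 2} ∪
     {q | ∃ (i j : Fin (n+1)) (hij : i ≠ j),
        q = MvPolynomial.X (⟨(i,j),hij⟩ : VGidx n) + MvPolynomial.X ⟨(j,i),hij.symm⟩} ∪
     {q | ∃ (i j k : Fin (n+1)) (hij : i ≠ j) (hjk : j ≠ k) (hki : k ≠ i),
        q = MvPolynomial.X (⟨(i,j),hij⟩ : VGidx n) * MvPolynomial.X ⟨(j,k),hjk⟩
          + MvPolynomial.X (⟨(j,k),hjk⟩ : VGidx n) * MvPolynomial.X ⟨(k,i),hki⟩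
          + MvPolynomial.X (⟨(k,i),hki⟩ : VGidx n) * MvPolynomial.X ⟨(i,j),hij⟩})

/-- The Varchenko–Gel'fand ring `VG_n`. -/
abbrev VG (n : ℕ) := MvPolynomial (VGidx n) ℚ ⧸ VGrel n

/-- The action of a permutation of `{1, …, n+1}` on the variable indices. -/
def VGpermIdx (n : ℕ) (σ : Equiv.Perm (Fin (n+1))) : VGidx n → VGidx n :=
  fun v => ⟨(σ v.1.1, σ v.1.2), fun h => v.2 (σ.injective h)⟩

lemma VGrel_stable (n : ℕ) (σ : Equiv.Perm (Fin (n+1))) :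
    ∀ a ∈ VGrel n, (MvPolynomial.rename (VGpermIdx n σ)) a ∈ VGrel n := by
  intro a ha
  have hle : (VGrel n).map (MvPolynomial.rename (VGpermIdx n σ)).toRingHom ≤ VGrel n := by
    rw [VGrel, Ideal.map_span, Ideal.span_le]
    rintro q ⟨p, hp, rfl⟩
    apply Ideal.subset_span
    simp only [Set.mem_union, Set.mem_setOf_eq] at hp ⊢
    rcases hp with ((⟨v, rfl⟩ | ⟨i, j, hij, rfl⟩) | ⟨i, j, k, hij, hjk, hki, rfl⟩)
    · refine Or.inl (Or.inl ⟨VGpermIdx n σ v, ?_⟩)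
      simp [map_pow, MvPolynomial.rename_X]
    · refine Or.inl (Or.inr ⟨σ i, σ j, fun h => hij (σ.injective h), ?_⟩)
      simp [map_add, MvPolynomial.rename_X, VGpermIdx]
    · refine Or.inr ⟨σ i, σ j, σ k, fun h => hij (σ.injective h), fun h => hjk (σ.injective h),
        fun h => hki (σ.injective h), ?_⟩
      simp [map_add, map_mul, MvPolynomial.rename_X, VGpermIdx]
  exact hle (Ideal.mem_map_of_mem _ ha)

/-- The algebra automorphism of `VG_n` induced by a permutation of `{1, …, n+1}`. -/
def VGperm (n : ℕ) (σ : Equiv.Perm (Fin (n+1))) : VG n →ₐ[ℚ] VG n :=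
  Ideal.Quotient.liftₐ (VGrel n)
    ((Ideal.Quotient.mkₐ ℚ (VGrel n)).comp (MvPolynomial.rename (VGpermIdx n σ)))
    (fun a ha => by
      simp only [AlgHom.comp_apply, Ideal.Quotient.mkₐ_eq_mk]
      exact Ideal.Quotient.eq_zero_iff_mem.mpr (VGrel_stable n σ a ha))

/-- The subalgebra of `S_n`-invariants of `VG_n`, where `S_n` is the subgroup of permutations
of `{1, …, n+1}` fixing `n+1`. -/
def VGinv (n : ℕ) : Subalgebra ℚ (VG n) where
  carrier := {x | ∀ σ : Equiv.Perm (Fin (n+1)), σ (Fin.last n) = Fin.last n → VGperm n σ x = x}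
  mul_mem' := fun hx hy σ hσ => by rw [map_mul, hx σ hσ, hy σ hσ]
  add_mem' := fun hx hy σ hσ => by rw [map_add, hx σ hσ, hy σ hσ]
  one_mem' := fun σ _ => map_one _
  zero_mem' := fun σ _ => map_zero _
  algebraMap_mem' := fun r σ hσ => AlgHom.commutes _ r

/-- The subalgebra of `S_{n+1}`-invariants of `VG_n`. -/
def VGinvFull (n : ℕ) : Subalgebra ℚ (VG n) where
  carrier := {x | ∀ σ : Equiv.Perm (Fin (n+1)), VGperm n σ x = x}
  mul_mem' := fun hx hy σ => by rw [map_mul, hx σ, hy σ]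
  add_mem' := fun hx hy σ => by rw [map_add, hx σ, hy σ]
  one_mem' := fun σ => map_one _
  zero_mem' := fun σ => map_zero _
  algebraMap_mem' := fun r σ => AlgHom.commutes _ r

/-- The element `z = x_{1,n+1} + x_{2,n+1} + ⋯ + x_{n,n+1}` of `VG_n`. -/
def zVG (n : ℕ) : VG n :=
  Ideal.Quotient.mk (VGrel n)
    (∑ i : Fin n, MvPolynomial.X ⟨(i.castSucc, Fin.last n), (Fin.castSucc_lt_last i).ne⟩)

/-! ### Generators with total indexing -/

/-- The class of `x_{ij}`, extended by zero to `i = j`. -/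
def vx (n : ℕ) (i j : Fin (n+1)) : VG n :=
  if h : i ≠ j then Ideal.Quotient.mk (VGrel n) (MvPolynomial.X ⟨(i,j),h⟩) else 0

lemma vx_self (n : ℕ) (i : Fin (n+1)) : vx n i i = 0 := by simp [vx]

lemma vx_antisymm (n : ℕ) (i j : Fin (n+1)) : vx n j i = - vx n i j := by
  by_cases h : i = j
  · subst h; simp [vx_self]
  · rw [eq_neg_iff_add_eq_zero, add_comm]
    rw [vx, vx, dif_pos h, dif_pos (Ne.symm h), ← map_add, Ideal.Quotient.eq_zero_iff_mem]
    exact Ideal.subset_span (Or.inl (Or.inr ⟨i, j, h, rfl⟩))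

lemma vx_sq (n : ℕ) (i j : Fin (n+1)) : vx n i j * vx n i j = 0 := by
  by_cases h : i = j
  · subst h; simp [vx_self]
  · rw [vx, dif_pos h, ← map_mul, Ideal.Quotient.eq_zero_iff_mem, ← pow_two]
    exact Ideal.subset_span (Or.inl (Or.inl ⟨_, rfl⟩))

lemma vx_arnold (n : ℕ) (i j k : Fin (n+1)) :
    vx n i j * vx n j k + vx n j k * vx n k i + vx n k i * vx n i j = 0 := by
  by_cases hij : i = j
  · subst hij
    rw [vx_self, vx_antisymm n i k]
    linear_combination - vx_sq n i k
  by_cases hjk : j = k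
  · subst hjk
    rw [vx_self, vx_antisymm n i j]
    linear_combination - vx_sq n i j
  by_cases hki : k = i
  · subst hki
    rw [vx_self, vx_antisymm n k j]
    linear_combination - vx_sq n k j
  · rw [vx, vx, vx, dif_pos hij, dif_pos hjk, dif_pos hki, ← map_mul, ← map_mul, ← map_mul,
      ← map_add, ← map_add, Ideal.Quotient.eq_zero_iff_mem]
    exact Ideal.subset_span (Or.inr ⟨i, j, k, hij, hjk, hki, rfl⟩)

/-- Form of the Arnold relation used to expand products at a common vertex. -/
lemma vx_split (n : ℕ) (c a b : Fin (n+1)) :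
    vx n c a * vx n c b = vx n c a * vx n a b + vx n c b * vx n b a := by
  have h := vx_arnold n c a b
  rw [vx_antisymm n c b] at h
  rw [vx_antisymm n a b]
  linear_combination -h

lemma VGperm_vx (n : ℕ) (σ : Equiv.Perm (Fin (n+1))) (i j : Fin (n+1)) :
    VGperm n σ (vx n i j) = vx n (σ i) (σ j) := by
  by_cases h : i = j
  · subst h; simp [vx_self]
  · have h' : σ i ≠ σ j := fun e => h (σ.injective e)
    rw [vx, vx, dif_pos h, dif_pos h']
    change Ideal.Quotient.mk (VGrel n) (MvPolynomial.rename (VGpermIdx n σ) (MvPolynomial.X _)) = _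
    rw [MvPolynomial.rename_X]
    rfl

lemma zVG_eq (n : ℕ) : zVG n = ∑ i, vx n i (Fin.last n) := by
  rw [Fin.sum_univ_castSucc, vx_self, add_zero, zVG, map_sum]
  refine Finset.sum_congr rfl fun i _ => ?_
  rw [vx, dif_pos (Fin.castSucc_lt_last i).ne]

lemma VGperm_zVG (n : ℕ) (σ : Equiv.Perm (Fin (n+1))) (h : σ (Fin.last n) = Fin.last n) :
    VGperm n σ (zVG n) = zVG n := by
  rw [zVG_eq, map_sum]
  simp only [VGperm_vx, h]
  exact Equiv.sum_comp σ (fun i => vx n i (Fin.last n))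

lemma VG_adjoin (n : ℕ) :
    Algebra.adjoin ℚ {y | ∃ i j, y = vx n i j} = (⊤ : Subalgebra ℚ (VG n)) := by
  rw [eq_top_iff]
  rintro y -
  obtain ⟨p, rfl⟩ := Ideal.Quotient.mk_surjective y
  induction p using MvPolynomial.induction_on with
  | C a => exact Subalgebra.algebraMap_mem _ a
  | add p q hp hq => rw [map_add]; exact add_mem hp hq
  | mul_X p v hp =>
    rw [map_mul]
    refine mul_mem hp (Algebra.subset_adjoin ⟨v.1.1, v.1.2, ?_⟩)
    rw [vx, dif_pos v.2]

lemma VGperm_mul (n : ℕ) (σ τ : Equiv.Perm (Fin (n+1))) (y : VG n) :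
    VGperm n σ (VGperm n τ y) = VGperm n (σ * τ) y := by
  have : y ∈ Algebra.adjoin ℚ {y | ∃ i j, y = vx n i j} := by rw [VG_adjoin]; trivial
  induction this using Algebra.adjoin_induction with
  | mem x hx => obtain ⟨i, j, rfl⟩ := hx; simp [VGperm_vx]
  | algebraMap r => simp only [AlgHom.commutes]
  | add x y _ _ hx hy => simp only [map_add, hx, hy]
  | mul x y _ _ hx hy => simp only [map_mul, hx, hy]

/-! ### Words -/

/-- The path monomial of a word starting at `c`. -/
def vp (n : ℕ) : Fin (n+1) → List (Fin (n+1)) → VG n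
  | _, [] => 1
  | c, a :: w => vx n c a * vp n a w

lemma vp_append (n : ℕ) (c i : Fin (n+1)) (u v : List (Fin (n+1))) :
    vp n c (u ++ i :: v) = vp n c (u ++ [i]) * vp n i v := by
  induction u generalizing c with
  | nil => simp [vp]
  | cons a u ih => simp only [List.cons_append, vp, ih, mul_assoc]

lemma VGperm_vp (n : ℕ) (σ : Equiv.Perm (Fin (n+1))) (c : Fin (n+1)) (w : List (Fin (n+1))) :
    VGperm n σ (vp n c w) = vp n (σ c) (w.map σ) := by
  induction w generalizing c with
  | nil => simp [vp]
  | cons a w ih => simp only [List.map_cons, vp, map_mul, ih, VGperm_vx]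

/-- Shuffle product. -/
lemma vp_mul_mem (n : ℕ) (c : Fin (n+1)) (u v : List (Fin (n+1))) :
    vp n c u * vp n c v ∈ Submodule.span ℚ {y | ∃ w, w.Perm (u ++ v) ∧ y = vp n c w} := by
  induction hk : u.length + v.length using Nat.strong_induction_on generalizing c u v with
  | _ k ih =>
  subst hk
  match u, v with
  | [], v => exact Submodule.subset_span ⟨v, by simp, by simp [vp]⟩
  | a :: u, [] => exact Submodule.subset_span ⟨a :: u, by simp, by simp [vp]⟩
  | a :: u, b :: v =>
    have h1 := ih _ (by simp) a u (b :: v) rfl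
    have h2 := ih _ (by simp) b (a :: u) v rfl
    have e : vp n c (a :: u) * vp n c (b :: v) =
        vx n c a * (vp n a u * vp n a (b :: v)) + vx n c b * (vp n b (a :: u) * vp n b v) := by
      simp only [vp]
      linear_combination (vp n a u * vp n b v) * vx_split n c a b
    rw [e]
    refine add_mem ?_ ?_
    · have := Submodule.mem_map_of_mem (f := LinearMap.mulLeft ℚ (vx n c a)) h1
      rw [Submodule.map_span] at this
      refine Submodule.span_mono ?_ this
      rintro _ ⟨_, ⟨w, hw, rfl⟩, rfl⟩
      exact ⟨a :: w, by simpa using hw, rfl⟩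
    · have := Submodule.mem_map_of_mem (f := LinearMap.mulLeft ℚ (vx n c b)) h2
      rw [Submodule.map_span] at this
      refine Submodule.span_mono ?_ this
      rintro _ ⟨_, ⟨w, hw, rfl⟩, rfl⟩
      refine ⟨b :: w, ?_, rfl⟩
      refine (hw.cons b).trans ?_
      exact (List.perm_middle (l₁ := a :: u)).symm

/-- Insertion formula. -/
lemma vp_mul_vx (n : ℕ) (c a : Fin (n+1)) (w : List (Fin (n+1))) :
    vp n c w * vx n c a = ((List.permutations'Aux a w).map (vp n c)).sum := by
  induction w generalizing c with
  | nil => simp [vp]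
  | cons d w ih =>
    rw [List.permutations'Aux, List.map_cons, List.sum_cons, List.map_map]
    have : (List.map (vp n c ∘ List.cons d) (List.permutations'Aux a w)).sum
        = vx n c d * (vp n d w * vx n d a) := by
      rw [ih, ← List.sum_map_mul_left]
      rfl
    rw [this]
    simp only [vp]
    linear_combination vp n d w * vx_split n c d a

/-- Cycles vanish. -/
lemma vp_cycle (n : ℕ) (i j : Fin (n+1)) (w : List (Fin (n+1))) :
    vp n i (w ++ [j]) * vx n i j = 0 := by
  induction w generalizing i with
  | nil => simp [vp, vx_sq]
  | cons c w ih =>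
    simp only [List.cons_append, vp]
    have h := vx_split n i c j
    rw [vx_antisymm n c j] at h
    linear_combination vp n c (w ++ [j]) * h + (vx n i c - vx n i j) * ih c

lemma vp_mul_last (n : ℕ) (c a : Fin (n+1)) (w : List (Fin (n+1))) (h : a ∈ w) :
    vp n c w * vx n c a = 0 := by
  obtain ⟨u, v, rfl⟩ := List.append_of_mem h
  rw [vp_append]
  linear_combination vp n a v * vp_cycle n c a u

lemma vp_not_nodup (n : ℕ) (c : Fin (n+1)) (w : List (Fin (n+1))) (h : ¬ (c :: w).Nodup) :
    vp n c w = 0 := by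
  induction w generalizing c with
  | nil => simp at h
  | cons a w ih =>
    by_cases h2 : (a :: w).Nodup
    · have hc : c ∈ a :: w := by
        by_contra hc
        exact h (List.nodup_cons.2 ⟨hc, h2⟩)
      rcases List.mem_cons.1 hc with rfl | hc
      · simp [vp, vx_self]
      · simp only [vp]
        rw [vx_antisymm n a c]
        linear_combination - vp_mul_last n a c w hc
    · simp only [vp]; rw [ih a h2, mul_zero]

/-! ### Decomposition -/

/-- Subalgebra generated by the variables indexed by `T`. -/
def vB (n : ℕ) (T : Finset (Fin (n+1))) : Subalgebra ℚ (VG n) :=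
  Algebra.adjoin ℚ {y | ∃ i ∈ T, ∃ j ∈ T, y = vx n i j}

lemma vB_mono (n : ℕ) {S T : Finset (Fin (n+1))} (h : S ⊆ T) : vB n S ≤ vB n T := by
  apply Algebra.adjoin_mono
  rintro y ⟨i, hi, j, hj, rfl⟩
  exact ⟨i, h hi, j, h hj, rfl⟩

/-- The rooted decomposition span. -/
def vE (n : ℕ) (T : Finset (Fin (n+1))) (b : Fin (n+1)) : Submodule ℚ (VG n) :=
  Submodule.span ℚ {y | ∃ w : List (Fin (n+1)), (∀ a ∈ w, a ∈ T) ∧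
    ∃ u ∈ vB n (T \ (b :: w).toFinset), y = vp n b w * u}

lemma vE_merge (n : ℕ) (T : Finset (Fin (n+1))) (b i j : Fin (n+1))
    (w v : List (Fin (n+1))) (hw : ∀ a ∈ w, a ∈ T) (hj : j ∈ T) (hv : ∀ a ∈ v, a ∈ T)
    (hi : i ∈ b :: w) (u : VG n)
    (hu : u ∈ vB n (T \ (b :: (w ++ j :: v)).toFinset)) :
    vp n b w * vx n i j * (vp n j v * u) ∈ vE n T b := by
  -- split the word at `i`
  obtain ⟨P, w1, w2, hP, hPw⟩ : ∃ (P : VG n) (w1 w2 : List (Fin (n+1))),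
      w1 ++ w2 = w ∧ ∀ w', vp n b (w1 ++ w') = P * vp n i w' := by
    rcases List.mem_cons.1 hi with rfl | hi
    · exact ⟨1, [], w, by simp, by simp⟩
    · obtain ⟨s, t, rfl⟩ := List.append_of_mem hi
      refine ⟨vp n b (s ++ [i]), s ++ [i], t, by simp, fun w' => ?_⟩
      rw [← vp_append]; simp
  have h := vp_mul_mem n i w2 (j :: v)
  have e : vp n b w * vx n i j * (vp n j v * u) = P * u * (vp n i w2 * vp n i (j :: v)) := by
    rw [← hP, hPw]; simp only [vp]; ring
  rw [e]
  have := Submodule.mem_map_of_mem (f := LinearMap.mulLeft ℚ (P * u)) h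
  rw [Submodule.map_span] at this
  refine Submodule.span_mono ?_ this
  rintro _ ⟨_, ⟨w', hw', rfl⟩, rfl⟩
  have hperm : (w1 ++ w').Perm (w ++ j :: v) := by
    rw [← hP, List.append_assoc]
    exact hw'.append_left w1
  refine ⟨w1 ++ w', ?_, u, ?_, ?_⟩
  · intro a ha
    have := hperm.subset ha
    simp only [List.mem_append, List.mem_cons] at this
    rcases this with h | rfl | h
    · exact hw a h
    · exact hj
    · exact hv a h
  · rw [List.toFinset_eq_of_perm _ _ (hperm.cons b)]; exact hu
  · rw [hPw]; simp only [LinearMap.mulLeft_apply]; ring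

lemma vB_le_vE (n : ℕ) (T : Finset (Fin (n+1))) (b : Fin (n+1)) (hb : b ∈ T) :
    Subalgebra.toSubmodule (vB n T) ≤ vE n T b := by
  induction hk : T.card using Nat.strong_induction_on generalizing T b with
  | _ k ih =>
  subst hk
  have hstep : ∀ i ∈ T, ∀ j ∈ T, ∀ y ∈ vE n T b, y * vx n i j ∈ vE n T b := by
    intro i hi j hj y hy
    induction hy using Submodule.span_induction with
    | zero => rw [zero_mul]; exact zero_mem _
    | add x y _ _ hx hy => rw [add_mul]; exact add_mem hx hy
    | smul r x _ hx => rw [smul_mul_assoc]; exact Submodule.smul_mem _ _ hx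
    | mem y hy =>
      obtain ⟨w, hw, u, hu, rfl⟩ := hy
      have key : ∀ i ∈ T, ∀ j ∈ T, i ∈ b :: w → vp n b w * u * vx n i j ∈ vE n T b := by
        intro i hi j hj hiw
        by_cases hjw : j ∈ b :: w
        · have := vE_merge n T b i j w [] hw hj (by simp) hiw u (by
            convert hu using 3
            ext a; simp only [List.mem_toFinset, List.mem_cons, List.mem_append] at hjw ⊢
            constructor
            · rintro (h | h | h | h)
              · exact Or.inl h
              · exact Or.inr h
              · subst h; exact hjw
              · simp at h
            · tauto)
          simp only [vp, one_mul] at this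
          convert this using 1; ring
        · set T' := T \ (b :: w).toFinset with hT'
          have hjT : j ∈ T' := by
            rw [hT', Finset.mem_sdiff, List.mem_toFinset]; exact ⟨hj, hjw⟩
          have hlt : T'.card < T.card := by
            apply Finset.card_lt_card
            refine ⟨Finset.sdiff_subset, fun h => ?_⟩
            have := h hb
            simp [hT'] at this
          have hu' := ih _ hlt T' j hjT rfl hu
          clear hu
          induction hu' using Submodule.span_induction with
          | zero => simp
          | add x y _ _ hx hy =>
            rw [mul_add, add_mul]; exact add_mem hx hy
          | smul r x _ hx =>
            rw [mul_smul_comm, smul_mul_assoc]; exact Submodule.smul_mem _ _ hx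
          | mem y hy =>
            obtain ⟨v, hv, u', hu', rfl⟩ := hy
            have := vE_merge n T b i j w v hw hj
              (fun a ha => (Finset.mem_sdiff.1 (hv a ha)).1) hiw u' (by
                convert hu' using 2
                ext a
                simp only [hT', List.mem_toFinset, List.mem_cons, List.mem_append,
                  Finset.mem_sdiff]
                tauto)
            convert this using 1; ring
      by_cases hiw : i ∈ b :: w
      · exact key i hi j hj hiw
      by_cases hjw : j ∈ b :: w
      · have e : vp n b w * u * vx n i j = -(vp n b w * u * vx n j i) := by
          rw [vx_antisymm n j i]; ring
        rw [e]
        exact neg_mem (key j hj i hi hjw)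
      · refine Submodule.subset_span ⟨w, hw, u * vx n i j, mul_mem hu ?_, by ring⟩
        refine Algebra.subset_adjoin ⟨i, ?_, j, ?_, rfl⟩
        · rw [Finset.mem_sdiff, List.mem_toFinset]; exact ⟨hi, hiw⟩
        · rw [Finset.mem_sdiff, List.mem_toFinset]; exact ⟨hj, hjw⟩
  have h1 : (1 : VG n) ∈ vE n T b :=
    Submodule.subset_span ⟨[], by simp, 1, one_mem _, by simp [vp]⟩
  have hall : ∀ y ∈ vB n T, ∀ e ∈ vE n T b, e * y ∈ vE n T b := by
    intro y hy
    induction hy using Algebra.adjoin_induction with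
    | mem x hx => obtain ⟨i, hi, j, hj, rfl⟩ := hx; exact hstep i hi j hj
    | algebraMap r =>
      intro e he
      rw [mul_comm, ← Algebra.smul_def]; exact Submodule.smul_mem _ _ he
    | add x y _ _ hx hy => intro e he; rw [mul_add]; exact add_mem (hx e he) (hy e he)
    | mul x y _ _ hx hy => intro e he; rw [← mul_assoc]; exact hy _ (hx e he)
  intro y hy
  have := hall y hy 1 h1
  rwa [one_mul] at this

/-! ### Coinvariants -/

/-- Span of the differences `m - σ m`, for `σ` supported on `T`. -/
def vD (n : ℕ) (T : Finset (Fin (n+1))) : Submodule ℚ (VG n) :=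
  Submodule.span ℚ {y | ∃ σ : Equiv.Perm (Fin (n+1)), (∀ i ∉ T, σ i = i) ∧
    ∃ m, y = m - VGperm n σ m}

lemma vD_mono (n : ℕ) {S T : Finset (Fin (n+1))} (h : S ⊆ T) : vD n S ≤ vD n T := by
  apply Submodule.span_mono
  rintro y ⟨σ, hσ, m, rfl⟩
  exact ⟨σ, fun i hi => hσ i (fun h' => hi (h h')), m, rfl⟩

lemma vD_mul (n : ℕ) (T : Finset (Fin (n+1))) (q : VG n)
    (hq : ∀ σ : Equiv.Perm (Fin (n+1)), (∀ i ∉ T, σ i = i) → VGperm n σ q = q)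
    (d : VG n) (hd : d ∈ vD n T) : q * d ∈ vD n T := by
  have := Submodule.mem_map_of_mem (f := LinearMap.mulLeft ℚ q) hd
  rw [vD, Submodule.map_span] at this
  refine Submodule.span_mono ?_ this
  rintro _ ⟨_, ⟨σ, hσ, m, rfl⟩, rfl⟩
  refine ⟨σ, hσ, q * m, ?_⟩
  rw [map_mul, hq σ hσ, LinearMap.mulLeft_apply, mul_sub]

lemma exists_perm_map (n : ℕ) (v w : List (Fin (n+1))) (hv : v.Nodup) (h : v.Perm w) :
    ∃ σ : Equiv.Perm (Fin (n+1)), v.map σ = w ∧ ∀ i ∉ v, σ i = i := by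
  have hw : w.Nodup := h.nodup_iff.1 hv
  let e : {x // x ∈ v} ≃ {x // x ∈ v} :=
    (List.Nodup.getEquiv v hv).symm.trans ((finCongr h.length_eq).trans
      ((List.Nodup.getEquiv w hw).trans (Equiv.subtypeEquivRight fun x => h.mem_iff.symm)))
  refine ⟨Equiv.Perm.ofSubtype e, ?_, fun i hi => Equiv.Perm.ofSubtype_apply_of_not_mem e hi⟩
  apply List.ext_getElem
  · simp [h.length_eq]
  · intro k h1 h2
    have hk : k < v.length := by simpa using h1
    rw [List.getElem_map, Equiv.Perm.ofSubtype_apply_of_mem e (List.getElem_mem hk)]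
    have : (⟨v[k], List.getElem_mem hk⟩ : {x // x ∈ v}) = List.Nodup.getEquiv v hv ⟨k, hk⟩ := rfl
    rw [this]
    simp [e]

/-- Sum over insertions is a multiple, modulo coinvariants, when all terms are equivalent. -/
lemma sum_sub_mem {V : Type*} [AddCommGroup V] [Module ℚ V] (D : Submodule ℚ V) (L : List V)
    (q : V) (h : ∀ y ∈ L, y - q ∈ D) : L.sum - (L.length : ℚ) • q ∈ D := by
  induction L with
  | nil => simp
  | cons y L ih =>
    have h1 := h y (by simp)
    have h2 := ih (fun z hz => h z (by simp [hz]))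
    have : (y :: L).sum - ((y :: L).length : ℚ) • q = (y - q) + (L.sum - (L.length : ℚ) • q) := by
      rw [List.sum_cons, List.length_cons, Nat.cast_add, add_smul, Nat.cast_one, one_smul]; abel
    rw [this]; exact add_mem h1 h2

/-- Words with the same letters and root agree modulo coinvariants. -/
lemma vp_sub_mem (n : ℕ) (T : Finset (Fin (n+1))) (c d : Fin (n+1)) (v w : List (Fin (n+1)))
    (hv : (c :: v).Nodup) (hT : ∀ a ∈ c :: v, a ∈ T) (h : (c :: v).Perm (d :: w)) :
    vp n c v - vp n d w ∈ vD n T := by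
  obtain ⟨σ, h1, h2⟩ := exists_perm_map n _ _ hv h
  rw [List.map_cons, List.cons.injEq] at h1
  refine Submodule.subset_span ⟨σ, fun i hi => h2 i (fun h' => hi (hT i h')), vp n c v, ?_⟩
  rw [VGperm_vp, h1.1, h1.2]

lemma vp_sub_mem' (n : ℕ) (T : Finset (Fin (n+1))) (c : Fin (n+1)) (v w : List (Fin (n+1)))
    (hv : (c :: v).Nodup) (hT : ∀ a ∈ v, a ∈ T) (h : v.Perm w) :
    vp n c v - vp n c w ∈ vD n T := by
  obtain ⟨σ, h1, h2⟩ := exists_perm_map n _ _ (List.nodup_cons.1 hv).2 h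
  refine Submodule.subset_span ⟨σ, fun i hi => h2 i (fun h' => hi (hT i h')), vp n c v, ?_⟩
  rw [VGperm_vp, h1, h2 c (List.nodup_cons.1 hv).1]

lemma perm_of_mem_aux {α : Type*} (a : α) (w v : List α) (h : v ∈ List.permutations'Aux a w) :
    v.Perm (a :: w) := by
  induction w generalizing v with
  | nil => simp at h; subst h; rfl
  | cons d w ih =>
    rw [List.permutations'Aux, List.mem_cons, List.mem_map] at h
    rcases h with rfl | ⟨v', hv', rfl⟩
    · rfl
    · exact ((ih v' hv').cons d).trans (List.Perm.swap a d w)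

lemma vp_mem_vD (n : ℕ) (T : Finset (Fin (n+1))) (c a : Fin (n+1)) (w : List (Fin (n+1)))
    (hv : (a :: c :: w).Nodup) (hT : ∀ x ∈ a :: c :: w, x ∈ T) :
    vp n a (c :: w) ∈ vD n T := by
  have h1 := vp_mul_vx n c a w
  have h2 := sum_sub_mem (vD n T) ((List.permutations'Aux a w).map (vp n c)) (vp n a (c :: w)) (by
    intro y hy
    obtain ⟨v, hv', rfl⟩ := List.mem_map.1 hy
    have hp : (c :: v).Perm (a :: c :: w) :=
      ((perm_of_mem_aux a w v hv').cons c).trans (List.Perm.swap a c w)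
    exact vp_sub_mem n T c a v (c :: w) (hp.nodup_iff.2 hv) (fun x hx => hT x (hp.subset hx)) hp)
  rw [← h1, List.length_map, List.length_permutations'Aux] at h2
  have e : vp n c w * vx n c a - ((w.length + 1 : ℕ) : ℚ) • vp n a (c :: w)
      = (-(w.length + 2 : ℚ)) • vp n a (c :: w) := by
    have : vp n c w * vx n c a = (-1 : ℚ) • vp n a (c :: w) := by
      simp only [vp]; rw [vx_antisymm n a c, neg_smul, one_smul]; ring
    rw [this, ← sub_smul]; congr 1; push_cast; ring
  rw [e] at h2
  exact (Submodule.smul_mem_iff _ (by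
    have : (0 : ℚ) ≤ w.length := Nat.cast_nonneg _
    intro h; linarith)).1 h2

lemma vB_le (n : ℕ) (T : Finset (Fin (n+1))) :
    Subalgebra.toSubmodule (vB n T) ≤ Submodule.span ℚ {1} ⊔ vD n T := by
  induction hk : T.card using Nat.strong_induction_on generalizing T with
  | _ k ih =>
  subst hk
  rcases T.eq_empty_or_nonempty with rfl | ⟨b, hb⟩
  · have : vB n ∅ = ⊥ := by simp [vB]
    rw [this]
    refine le_trans ?_ le_sup_left
    rw [Algebra.toSubmodule_bot, Submodule.one_eq_span]
  · refine (vB_le_vE n T b hb).trans (Submodule.span_le.2 ?_)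
    rintro _ ⟨w, hw, u, hu, rfl⟩
    by_cases hnd : (b :: w).Nodup
    swap
    · rw [vp_not_nodup n b w hnd, zero_mul]; exact zero_mem _
    have hlt : (T \ (b :: w).toFinset).card < T.card := by
      apply Finset.card_lt_card
      refine ⟨Finset.sdiff_subset, fun h => ?_⟩
      have := h hb
      simp at this
    have hu' := ih _ hlt _ rfl hu
    obtain ⟨y, hy, d, hd, rfl⟩ := Submodule.mem_sup.1 hu'
    obtain ⟨r, rfl⟩ := Submodule.mem_span_singleton.1 hy
    have hd' := vD_mono n (Finset.sdiff_subset) (vD_mul n _ (vp n b w) (by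
      intro σ hσ
      have hfix : ∀ a ∈ b :: w, σ a = a := fun a ha => hσ a (by
        rw [Finset.mem_sdiff, List.mem_toFinset]; tauto)
      rw [VGperm_vp, hfix b (by simp)]
      congr 1
      conv_rhs => rw [← List.map_id w]
      exact List.map_congr_left fun a ha => hfix a (by simp [ha])) d hd)
    rw [mul_add]
    refine add_mem ?_ (Submodule.mem_sup_right hd')
    rw [mul_smul_comm, mul_one]
    refine Submodule.smul_mem _ _ ?_
    match w, hw, hnd with
    | [], _, _ => exact Submodule.mem_sup_left (Submodule.subset_span rfl)
    | c :: w, hw, hnd =>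
      refine Submodule.mem_sup_right (vp_mem_vD n T c b w hnd ?_)
      intro x hx
      rcases List.mem_cons.1 hx with rfl | hx
      · exact hb
      · exact hw x hx

/-- The points other than the last one. -/
def vT (n : ℕ) : Finset (Fin (n+1)) := Finset.univ.erase (Fin.last n)

lemma mem_vT (n : ℕ) (i : Fin (n+1)) : i ∈ vT n ↔ i ≠ Fin.last n := by simp [vT]

/-- Span of the powers of `z`, plus coinvariants. -/
def vQ (n : ℕ) : Submodule ℚ (VG n) :=
  Subalgebra.toSubmodule (Algebra.adjoin ℚ {zVG n}) ⊔ vD n (vT n)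

lemma vQ_mul_z (n : ℕ) (y : VG n) (hy : y ∈ vQ n) : zVG n * y ∈ vQ n := by
  obtain ⟨q, hq, d, hd, rfl⟩ := Submodule.mem_sup.1 hy
  rw [mul_add]
  refine add_mem (Submodule.mem_sup_left ?_) (Submodule.mem_sup_right ?_)
  · exact (Algebra.adjoin ℚ {zVG n}).mul_mem (Algebra.subset_adjoin rfl) hq
  · exact vD_mul n _ _ (fun σ hσ => VGperm_zVG n σ (hσ _ (by simp [vT]))) d hd

lemma vp_mem_vQ (n : ℕ) (w : List (Fin (n+1))) (hw : (Fin.last n :: w).Nodup) :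
    vp n (Fin.last n) w ∈ vQ n := by
  induction w with
  | nil => exact Submodule.mem_sup_left (one_mem (Algebra.adjoin ℚ {zVG n}))
  | cons a w ih =>
    have hw' : (Fin.last n :: w).Nodup := by
      simp only [List.nodup_cons, List.mem_cons] at hw ⊢; tauto
    have h1 := vQ_mul_z n _ (ih hw')
    set q := vp n (Fin.last n) (a :: w) with hq
    set S : Finset (Fin (n+1)) := Finset.univ.filter (fun i => i ∉ Fin.last n :: w) with hS
    have e : zVG n * vp n (Fin.last n) w
        = - ∑ i ∈ S, vp n (Fin.last n) w * vx n (Fin.last n) i := by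
      rw [zVG_eq, Finset.sum_mul, ← Finset.sum_neg_distrib]
      symm
      rw [hS]
      rw [Finset.sum_filter]
      refine Finset.sum_congr rfl fun i _ => ?_
      by_cases hi : i ∈ Fin.last n :: w
      swap
      · rw [if_pos hi, vx_antisymm n (Fin.last n) i]; ring
      · rw [if_neg (not_not.2 hi)]
        rcases List.mem_cons.1 hi with rfl | hi
        · simp [vx_self]
        · rw [vx_antisymm n (Fin.last n) i]
          linear_combination vp_mul_last n (Fin.last n) i w hi
    have hterm : ∀ i ∈ S, vp n (Fin.last n) w * vx n (Fin.last n) i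
        - ((w.length + 1 : ℕ) : ℚ) • q ∈ vD n (vT n) := by
      intro i hi
      rw [hS, Finset.mem_filter] at hi
      have hi := hi.2
      rw [vp_mul_vx]
      have hnd : (Fin.last n :: i :: w).Nodup := by
        simp only [List.nodup_cons, List.mem_cons] at hw hi ⊢
        push Not at hi
        refine ⟨?_, hi.2, hw.2.2⟩
        rintro (h | h)
        · exact hi.1 h.symm
        · exact hw.1 (Or.inr h)
      -- compare the words `i :: w` and `a :: w` by a transposition
      have hia : vp n (Fin.last n) (i :: w) - q ∈ vD n (vT n) := by
        refine Submodule.subset_span ⟨Equiv.swap i a, ?_, vp n (Fin.last n) (i :: w), ?_⟩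
        · intro j hj
          rw [mem_vT, not_not] at hj
          subst hj
          apply Equiv.swap_apply_of_ne_of_ne
          · simp at hnd; tauto
          · simp at hw; tauto
        · have hfix : ∀ j ∈ Fin.last n :: w, Equiv.swap i a j = j := by
            intro j hj
            apply Equiv.swap_apply_of_ne_of_ne
            · rintro rfl; exact hi hj
            · rintro rfl
              simp only [List.nodup_cons, List.mem_cons] at hw hj
              rcases hj with h | h
              · exact hw.1 (Or.inl h.symm)
              · exact hw.2.1 h
          rw [VGperm_vp, hfix _ (by simp), List.map_cons, Equiv.swap_apply_left,
            List.map_congr_left (g := id) (fun j hj => hfix j (by simp [hj])), List.map_id]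
      have := sum_sub_mem (vD n (vT n))
        ((List.permutations'Aux i w).map (vp n (Fin.last n))) q (by
          intro y hy
          obtain ⟨v, hv', rfl⟩ := List.mem_map.1 hy
          have hp := perm_of_mem_aux i w v hv'
          have hnd' : (Fin.last n :: v).Nodup := (hp.cons _).nodup_iff.2 hnd
          have := vp_sub_mem' n (vT n) (Fin.last n) v (i :: w) hnd' (by
            intro x hx
            rw [mem_vT]
            rintro rfl
            exact (List.nodup_cons.1 hnd').1 hx) hp
          have h3 := add_mem this hia
          rwa [sub_add_sub_cancel] at h3)
      rwa [List.length_map, List.length_permutations'Aux] at this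
    have hsum := Submodule.sum_mem _ hterm
    rw [Finset.sum_sub_distrib, Finset.sum_const, ← Nat.cast_smul_eq_nsmul ℚ, smul_smul] at hsum
    have hsum' : _ ∈ vQ n := Submodule.mem_sup_right hsum
    rw [e] at h1
    have h4 := neg_mem (add_mem h1 hsum')
    rw [neg_add_eq_sub, sub_sub_cancel_left, neg_neg] at h4
    refine (Submodule.smul_mem_iff _ ?_).1 h4
    have : S.card ≠ 0 := by
      apply Finset.card_ne_zero_of_mem (a := a)
      rw [hS, Finset.mem_filter]
      simp only [List.nodup_cons, List.mem_cons] at hw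
      refine ⟨Finset.mem_univ _, ?_⟩
      simp only [List.mem_cons]
      rintro (h | h)
      · exact hw.1 (Or.inl h.symm)
      · exact hw.2.1 h
    positivity

lemma vQ_top (n : ℕ) : vQ n = ⊤ := by
  rw [eq_top_iff]
  have h0 : vB n Finset.univ = ⊤ := by
    rw [← VG_adjoin]; simp [vB]
  have h1 := vB_le_vE n Finset.univ (Fin.last n) (Finset.mem_univ _)
  rw [h0, Algebra.top_toSubmodule] at h1
  refine h1.trans (Submodule.span_le.2 ?_)
  rintro _ ⟨w, hw, u, hu, rfl⟩
  by_cases hnd : (Fin.last n :: w).Nodup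
  swap
  · rw [vp_not_nodup n _ w hnd, zero_mul]; exact zero_mem _
  have hu' := vB_le n _ hu
  obtain ⟨y, hy, d, hd, rfl⟩ := Submodule.mem_sup.1 hu'
  obtain ⟨r, rfl⟩ := Submodule.mem_span_singleton.1 hy
  have hd' := vD_mono n (T := vT n) (by
      intro i hi; rw [mem_vT]; rintro rfl; simp at hi) (vD_mul n _ (vp n (Fin.last n) w) (by
    intro σ hσ
    have hfix : ∀ a ∈ Fin.last n :: w, σ a = a := fun a ha => hσ a (by
      rw [Finset.mem_sdiff, List.mem_toFinset]; tauto)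
    rw [VGperm_vp, hfix (Fin.last n) (by simp)]
    congr 1
    conv_rhs => rw [← List.map_id w]
    exact List.map_congr_left fun a ha => hfix a (by simp [ha])) d hd)
  rw [mul_add]
  refine add_mem ?_ (Submodule.mem_sup_right hd')
  rw [mul_smul_comm, mul_one]
  exact Submodule.smul_mem _ _ (vp_mem_vQ n w hnd)

/-! ### Invariants -/

lemma zVG_mem_inv (n : ℕ) : zVG n ∈ VGinv n := fun σ hσ => VGperm_zVG n σ hσ

open Classical in
lemma inv_le_adjoin (n : ℕ) : VGinv n ≤ Algebra.adjoin ℚ {zVG n} := by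
  intro y hy
  let G : Finset (Equiv.Perm (Fin (n+1))) :=
    Finset.univ.filter (fun σ => σ (Fin.last n) = Fin.last n)
  let R : VG n →ₗ[ℚ] VG n := ∑ σ ∈ G, (VGperm n σ).toLinearMap
  have hRinv : ∀ q ∈ VGinv n, R q = (G.card : ℚ) • q := by
    intro q hq
    simp only [R, LinearMap.sum_apply, AlgHom.toLinearMap_apply]
    rw [Finset.sum_congr rfl (fun σ hσ => hq σ (Finset.mem_filter.1 hσ).2), Finset.sum_const,
      Nat.cast_smul_eq_nsmul]
  have hRD : ∀ d ∈ vD n (vT n), R d = 0 := by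
    intro d hd
    induction hd using Submodule.span_induction with
    | zero => simp
    | add x y _ _ hx hy => rw [map_add, hx, hy, add_zero]
    | smul r x _ hx => rw [map_smul, hx, smul_zero]
    | mem y hy =>
      obtain ⟨τ, hτ, m, rfl⟩ := hy
      have hτ' : τ (Fin.last n) = Fin.last n := hτ _ (by simp [vT])
      rw [map_sub, sub_eq_zero]
      simp only [R, LinearMap.sum_apply, AlgHom.toLinearMap_apply, VGperm_mul]
      symm
      refine Finset.sum_equiv (Equiv.mulRight τ) ?_ ?_
      · intro σ
        simp [G, hτ']
      · intro σ _; rfl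
  have hle : Algebra.adjoin ℚ {zVG n} ≤ VGinv n := by
    rw [Algebra.adjoin_le_iff, Set.singleton_subset_iff]; exact zVG_mem_inv n
  have hyQ : y ∈ vQ n := by rw [vQ_top]; trivial
  obtain ⟨q, hq, d, hd, rfl⟩ := Submodule.mem_sup.1 hyQ
  have h1 := hRinv _ hy
  rw [map_add, hRD d hd, add_zero, hRinv q (hle hq)] at h1
  have hG : (G.card : ℚ) ≠ 0 := by
    have : G.card ≠ 0 := Finset.card_ne_zero_of_mem (a := 1) (by simp [G])
    exact_mod_cast this
  have h2 := smul_right_injective (VG n) hG h1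
  rw [← h2]; exact hq

/-! ### Powers of `z` -/

lemma add_pow_of_sq {A : Type*} [CommRing A] (s y : A) (hy : y * y = 0) (m : ℕ) :
    (s + y) ^ (m+1) = s ^ (m+1) + (m+1 : ℕ) * (s ^ m * y) := by
  induction m with
  | zero => simp
  | succ m ih =>
    rw [pow_succ, ih]; push_cast
    linear_combination ((m + 1) * s ^ m) * hy

lemma sum_pow_of_sq {A ι : Type*} [CommRing A] (f : ι → A) (hf : ∀ i, f i * f i = 0)
    (s : Finset ι) :
    (∑ i ∈ s, f i) ^ s.card = (s.card.factorial : A) * ∏ i ∈ s, f i ∧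
      (∑ i ∈ s, f i) ^ (s.card + 1) = 0 := by
  classical
  induction s using Finset.induction_on with
  | empty => simp
  | insert a s ha ih =>
    rw [Finset.sum_insert ha, Finset.prod_insert ha, Finset.card_insert_of_notMem ha,
      add_comm (f a), add_pow_of_sq _ _ (hf a), add_pow_of_sq _ _ (hf a)]
    rw [pow_succ _ (s.card + 1), ih.1, ih.2, Nat.factorial_succ]
    push_cast
    constructor <;> ring

lemma zVG_pow_succ (n : ℕ) : zVG n ^ (n+1) = 0 := by
  have h := (sum_pow_of_sq (fun i : Fin n => vx n i.castSucc (Fin.last n))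
    (fun i => vx_sq n _ _) Finset.univ).2
  rw [Finset.card_fin] at h
  rw [zVG_eq, Fin.sum_univ_castSucc, vx_self, add_zero]
  exact h

/-- Square-zero ideal in the polynomial ring. -/
def vI (n : ℕ) : Ideal (MvPolynomial (Fin (n+1)) ℚ) :=
  Ideal.span (Set.range fun i => MvPolynomial.X i ^ 2)

/-- Images of the variables. -/
def vf (n : ℕ) (v : VGidx n) : MvPolynomial (Fin (n+1)) ℚ ⧸ vI n :=
  if v.1.1 < v.1.2 then Ideal.Quotient.mk _ (MvPolynomial.X v.1.1)
  else - Ideal.Quotient.mk _ (MvPolynomial.X v.1.2)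

lemma vI_sq (n : ℕ) (i : Fin (n+1)) :
    Ideal.Quotient.mk (vI n) (MvPolynomial.X i) * Ideal.Quotient.mk (vI n) (MvPolynomial.X i) = 0 := by
  rw [← map_mul, Ideal.Quotient.eq_zero_iff_mem, ← pow_two]
  exact Ideal.subset_span ⟨i, rfl⟩

/-- Detecting homomorphism. -/
def vφ (n : ℕ) : VG n →ₐ[ℚ] (MvPolynomial (Fin (n+1)) ℚ ⧸ vI n) :=
  Ideal.Quotient.liftₐ (VGrel n) (MvPolynomial.aeval (vf n)) (by
    intro a ha
    have : VGrel n ≤ RingHom.ker (MvPolynomial.aeval (vf n)) := by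
      rw [VGrel, Ideal.span_le]
      rintro q ((⟨v, rfl⟩ | ⟨i, j, hij, rfl⟩) | ⟨i, j, k, hij, hjk, hki, rfl⟩)
      · simp only [SetLike.mem_coe, RingHom.mem_ker, map_pow, MvPolynomial.aeval_X, vf]
        split_ifs
        · rw [pow_two]; exact vI_sq n _
        · linear_combination vI_sq n v.1.2
      · simp only [SetLike.mem_coe, RingHom.mem_ker, map_add, MvPolynomial.aeval_X, vf]
        rcases lt_or_gt_of_ne hij with h | h
        · rw [if_pos h, if_neg h.not_gt]; ring
        · rw [if_pos h, if_neg h.not_gt]; ring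
      · simp only [SetLike.mem_coe, RingHom.mem_ker, map_add, map_mul, MvPolynomial.aeval_X, vf]
        have hi := vI_sq n i
        have hj := vI_sq n j
        have hk := vI_sq n k
        split_ifs with h1 h2 h3 h3 h2 h3 h3
        all_goals first
          | (exfalso; omega)
          | linear_combination hi
          | linear_combination hj
          | linear_combination hk
          | linear_combination -hi
          | linear_combination -hj
          | linear_combination -hk
    exact this ha)

lemma zVG_pow_ne (n : ℕ) : zVG n ^ n ≠ 0 := by
  intro h
  have h1 := congrArg (vφ n) h
  have hz : vφ n (zVG n) = ∑ i : Fin n, Ideal.Quotient.mk (vI n) (MvPolynomial.X i.castSucc) := by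
    change MvPolynomial.aeval (vf n) (∑ i : Fin n, MvPolynomial.X _) = _
    rw [map_sum]
    refine Finset.sum_congr rfl fun i _ => ?_
    rw [MvPolynomial.aeval_X, vf, if_pos (Fin.castSucc_lt_last i)]
  have h2 := (sum_pow_of_sq
    (fun i : Fin n => Ideal.Quotient.mk (vI n) (MvPolynomial.X i.castSucc))
    (fun i => vI_sq n _) Finset.univ).1
  rw [Finset.card_fin] at h2
  rw [map_pow, hz, h2, map_zero] at h1
  rw [← map_prod, ← map_natCast (Ideal.Quotient.mk (vI n)), ← map_mul,
    Ideal.Quotient.eq_zero_iff_mem] at h1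
  have hI : vI n = Ideal.span (Set.image (fun s => MvPolynomial.monomial s (1 : ℚ))
      (Set.range fun i : Fin (n+1) => Finsupp.single i 2)) := by
    rw [vI, ← Set.range_comp]
    congr 2
    funext i
    simp [MvPolynomial.X_pow_eq_monomial]
  rw [hI, MvPolynomial.mem_ideal_span_monomial_image] at h1
  have hprod : (n.factorial : MvPolynomial (Fin (n+1)) ℚ) *
      ∏ i : Fin n, MvPolynomial.X i.castSucc = MvPolynomial.monomial
        (∑ i : Fin n, Finsupp.single i.castSucc 1) (n.factorial : ℚ) := by
    have : ∏ i : Fin n, (MvPolynomial.X i.castSucc : MvPolynomial (Fin (n+1)) ℚ)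
        = MvPolynomial.monomial (∑ i : Fin n, Finsupp.single i.castSucc 1) 1 := by
      rw [MvPolynomial.monomial_sum_one]; rfl
    rw [this, ← map_natCast (MvPolynomial.C), MvPolynomial.C_mul_monomial, mul_one]
  rw [hprod] at h1
  obtain ⟨_, ⟨i, rfl⟩, hle⟩ := h1 (∑ i : Fin n, Finsupp.single i.castSucc 1) (by
    rw [MvPolynomial.mem_support_iff, MvPolynomial.coeff_monomial, if_pos rfl]
    exact_mod_cast n.factorial_ne_zero)
  have h3 := hle i
  rw [Finsupp.finset_sum_apply] at h3
  simp only [Finsupp.single_apply, if_true] at h3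
  rw [← Finset.card_filter] at h3
  have : (Finset.univ.filter (fun j : Fin n => j.castSucc = i)).card ≤ 1 := by
    rw [Finset.card_le_one]
    intro a ha b hb
    simp only [Finset.mem_filter] at ha hb
    exact Fin.castSucc_injective n (ha.2.trans hb.2.symm)
  omega

lemma zVG_linInd (n : ℕ) : LinearIndependent ℚ (fun d : Fin (n+1) => zVG n ^ (d : ℕ)) := by
  rw [Fintype.linearIndependent_iff]
  intro g hg
  have key : ∀ k : ℕ, ∀ i : Fin (n+1), (i : ℕ) = k → g i = 0 := by
    intro k
    induction k using Nat.strong_induction_on with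
    | _ k ih =>
    intro i hi
    have h1 := congrArg (fun y => zVG n ^ (n - k) * y) hg
    simp only [mul_zero, Finset.mul_sum] at h1
    rw [Finset.sum_eq_single i] at h1
    · rw [mul_smul_comm, ← pow_add, show n - k + (i : ℕ) = n by omega] at h1
      exact (smul_eq_zero.1 h1).resolve_right (zVG_pow_ne n)
    · intro j _ hj
      rcases lt_or_ge (j : ℕ) k with h | h
      · rw [ih j h j rfl, zero_smul, mul_zero]
      · have hne : (j : ℕ) ≠ k := fun e => hj (Fin.ext (e.trans hi.symm))
        rw [mul_smul_comm, ← pow_add,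
          pow_eq_zero_of_le (show n + 1 ≤ n - k + (j : ℕ) by omega) (zVG_pow_succ n), smul_zero]
    · simp
  exact fun i => key i i rfl

lemma adjoin_le_span (n : ℕ) : Subalgebra.toSubmodule (Algebra.adjoin ℚ {zVG n}) ≤
    Submodule.span ℚ (Set.range (fun d : Fin (n+1) => zVG n ^ (d : ℕ))) := by
  rw [Algebra.adjoin_eq_span, Submodule.span_le]
  intro y hy
  obtain ⟨k, rfl⟩ := Submonoid.mem_closure_singleton.1 hy
  rcases Nat.lt_or_ge k (n+1) with h | h
  · exact Submodule.subset_span ⟨⟨k, h⟩, rfl⟩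
  · rw [pow_eq_zero_of_le h (zVG_pow_succ n)]; exact zero_mem _

/-- For every integer `n ≥ 2`, the powers `z^d` for `0 ≤ d ≤ n` lie in the
invariant subalgebra `VG_n^{S_n}`, and `(1, z, z², …, zⁿ)` is a basis of `VG_n^{S_n}` as a
`ℚ`-vector space: the family is linearly independent and its span is exactly `VG_n^{S_n}`. -/
theorem zVG_powers_basis_of_invariants (n : ℕ) (hn : 2 ≤ n) :
    (∀ d : ℕ, d ≤ n → zVG n ^ d ∈ VGinv n) ∧
    LinearIndependent ℚ (fun d : Fin (n+1) => zVG n ^ (d : ℕ)) ∧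
    Submodule.span ℚ (Set.range (fun d : Fin (n+1) => zVG n ^ (d : ℕ)))
      = Subalgebra.toSubmodule (VGinv n) := by
  have hmem : ∀ d : ℕ, zVG n ^ d ∈ VGinv n := fun d => pow_mem (zVG_mem_inv n) d
  refine ⟨fun d _ => hmem d, zVG_linInd n, le_antisymm ?_ ?_⟩
  · rw [Submodule.span_le]
    rintro _ ⟨d, rfl⟩
    exact hmem d
  · exact le_trans (fun y hy => inv_le_adjoin n hy) (adjoin_le_span n)

end
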